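/- arXiv:2402.17729 — 3 statements merged into one kernel-verified Lean document; each statement's English description precedes it below -/
import Mathlib

section
/- For any C ≥ 1 and any loss vector ℓ ∈ ℝ^C, the FAAL objective recovers the worst-class loss in the limit of an unbounded constraint: sup_{τ ≥ 0} L_FAAL(ℓ, τ) = lim_{τ → ∞} L_FAAL(ℓ, τ) = max_c ℓ_c. -/
open Real Finset

/-- The probability simplex `Δ_C` in `ℝ^C`. -/
def simplex (C : ℕ) : Set (Fin C → ℝ) :=
  {w | (∀ c, 0 ≤ w c) ∧ ∑ c, w c = 1}

/-- The uniform distribution `U` on `C` classes. -/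
noncomputable def uniform (C : ℕ) : Fin C → ℝ := fun _ => 1 / C

/-- Kullback–Leibler divergence `KL(p‖q)` with the conventions `0·log(0/q) = 0`
(automatic since `0 * x = 0`) and `KL(p‖q) = ⊤` when `p c > 0` but `q c = 0`. -/
noncomputable def KL {C : ℕ} (p q : Fin C → ℝ) : EReal :=
  if ∀ c, 0 < p c → 0 < q c
  then ((∑ c, p c * Real.log (p c / q c) : ℝ) : EReal)
  else ⊤

/-- The FAAL objective `L_FAAL(ℓ, τ) = sup { Σ_c w_c ℓ_c : w ∈ Δ_C, KL(U‖w) ≤ τ }`. -/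
noncomputable def faal (C : ℕ) (ℓ : Fin C → ℝ) (τ : ℝ) : ℝ :=
  sSup {s | ∃ w ∈ simplex C, KL (uniform C) w ≤ (τ : EReal) ∧ s = ∑ c, w c * ℓ c}

open Filter Topology

/-! Every weighted average of the losses is at most their maximum, so only the lower bound needs
work. The vertex `δ_c` of the simplex at a worst class attains the maximum but usually has
`KL(p‖δ_c) = ⊤`. Moving from `δ_c` slightly towards the reference distribution `p` makes the
divergence finite, so that the point is feasible for all large `τ`, and changes the average as
little as one likes. -/

section Simplex

theorem dotProduct_le_of_mem_stdSimplex {𝕜 ι : Type*} [Semiring 𝕜] [PartialOrder 𝕜]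
    [IsOrderedRing 𝕜] [Fintype ι] {w ℓ : ι → 𝕜} {M : 𝕜} (hw : w ∈ stdSimplex 𝕜 ι)
    (hℓ : ∀ i, ℓ i ≤ M) : w ⬝ᵥ ℓ ≤ M :=
  calc
    w ⬝ᵥ ℓ ≤ ∑ i, w i * M := sum_le_sum fun i _ => mul_le_mul_of_nonneg_left (hℓ i) (hw.1 i)
    _ = M := by rw [← sum_mul, hw.2, one_mul]

theorem simplex_eq_stdSimplex (C : ℕ) : simplex C = stdSimplex ℝ (Fin C) :=
  rfl

theorem uniform_mem_simplex {C : ℕ} (hC : C ≠ 0) : uniform C ∈ simplex C := by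
  refine ⟨fun _ => by unfold uniform; positivity, ?_⟩
  simp [uniform, hC]

end Simplex

section Divergence

variable {C : ℕ} {p q : Fin C → ℝ}

theorem KL_self (p : Fin C → ℝ) : KL p p = 0 := by
  have log_div_self (x : ℝ) : log (x / x) = 0 := by
    rcases eq_or_ne x 0 with rfl | hx <;> simp [*]
  simp [KL, log_div_self]

theorem KL_ne_top_iff : KL p q ≠ ⊤ ↔ ∀ c, 0 < p c → 0 < q c := by
  unfold KL
  split_ifs with h
  · exact iff_of_true (EReal.coe_ne_top _) h
  · exact iff_of_false (not_not.2 rfl) h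

theorem KL_lineMap_ne_top {v : Fin C → ℝ} (hv : ∀ c, 0 ≤ v c) {ε : ℝ} (hε₀ : 0 < ε)
    (hε₁ : ε ≤ 1) : KL p (AffineMap.lineMap v p ε) ≠ ⊤ := by
  refine KL_ne_top_iff.2 fun c hpc => ?_
  simp only [AffineMap.lineMap_apply_module, Pi.add_apply, Pi.smul_apply, smul_eq_mul]
  exact add_pos_of_nonneg_of_pos (mul_nonneg (sub_nonneg.2 hε₁) (hv c)) (mul_pos hε₀ hpc)

theorem exists_mem_simplex_KL_ne_top_and_lt_dotProduct (hp : p ∈ simplex C) {ℓ : Fin C → ℝ}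
    {c : Fin C} {a : ℝ} (ha : a < ℓ c) : ∃ w ∈ simplex C, KL p w ≠ ⊤ ∧ a < w ⬝ᵥ ℓ := by
  let path : ℝ → Fin C → ℝ := AffineMap.lineMap (Pi.single c 1) p
  have vertex_mem : Pi.single c 1 ∈ stdSimplex ℝ (Fin C) := single_mem_stdSimplex ℝ c
  have value_continuous : Continuous fun ε => path ε ⬝ᵥ ℓ :=
    AffineMap.lineMap_continuous.dotProduct continuous_const
  have value_tendsto : Tendsto (fun ε => path ε ⬝ᵥ ℓ) (𝓝 0) (𝓝 (ℓ c)) :=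
    value_continuous.tendsto' 0 _ (by simp [path])
  have eventually_value_gt : ∀ᶠ ε in 𝓝[>] 0, a < path ε ⬝ᵥ ℓ :=
    nhdsWithin_le_nhds (value_tendsto.eventually_const_lt ha)
  obtain ⟨ε, hε, hε₀, hε₁⟩ := (eventually_value_gt.and (Ioc_mem_nhdsGT one_pos)).exists
  refine ⟨path ε, ?_, KL_lineMap_ne_top vertex_mem.1 hε₀ hε₁, hε⟩
  rw [simplex_eq_stdSimplex] at hp ⊢
  exact (convex_stdSimplex ℝ _).lineMap_mem vertex_mem hp ⟨hε₀.le, hε₁⟩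

end Divergence

/-- The worst-case expected loss over the distributions `w` with `KL(p‖w) ≤ τ`. This is the
FAAL objective with an arbitrary reference distribution `p` in place of the uniform one:
`faal C` is definitionally `klRobustLoss (uniform C)`. -/
noncomputable def klRobustLoss {C : ℕ} (p ℓ : Fin C → ℝ) (τ : ℝ) : ℝ :=
  sSup {s | ∃ w ∈ simplex C, KL p w ≤ (τ : EReal) ∧ s = w ⬝ᵥ ℓ}

section RobustLoss

variable {C : ℕ} {p ℓ : Fin C → ℝ}

theorem klRobustLoss_le (hp : p ∈ simplex C) {M : ℝ} (hℓ : ∀ c, ℓ c ≤ M) {τ : ℝ} (hτ : 0 ≤ τ) :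
    klRobustLoss p ℓ τ ≤ M := by
  have hp_feasible : KL p p ≤ (τ : EReal) := (KL_self p).trans_le (EReal.coe_nonneg.2 hτ)
  refine csSup_le ⟨_, p, hp, hp_feasible, rfl⟩ ?_
  rintro _ ⟨w, hw, -, rfl⟩
  exact dotProduct_le_of_mem_stdSimplex hw hℓ

theorem dotProduct_le_klRobustLoss {w : Fin C → ℝ} (hw : w ∈ simplex C) {τ : ℝ}
    (hτ : KL p w ≤ (τ : EReal)) : w ⬝ᵥ ℓ ≤ klRobustLoss p ℓ τ := by
  obtain ⟨M, hM⟩ := (Set.finite_range ℓ).bddAbove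
  refine le_csSup ⟨M, ?_⟩ ⟨w, hw, hτ, rfl⟩
  rintro _ ⟨v, hv, -, rfl⟩
  exact dotProduct_le_of_mem_stdSimplex hv fun c => hM ⟨c, rfl⟩

theorem eventually_lt_klRobustLoss (hp : p ∈ simplex C) {c : Fin C} {a : ℝ} (ha : a < ℓ c) :
    ∀ᶠ τ in atTop, a < klRobustLoss p ℓ τ := by
  obtain ⟨w, hw, hKL, haw⟩ := exists_mem_simplex_KL_ne_top_and_lt_dotProduct hp ha
  filter_upwards [EReal.tendsto_coe_atTop.eventually_const_lt hKL.lt_top] with τ hτ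
  exact haw.trans_le (dotProduct_le_klRobustLoss hw hτ.le)

theorem faal_tendsto_worst_class_general (hp : p ∈ simplex C)
    (hne : (univ : Finset (Fin C)).Nonempty) :
    (⨆ τ : {t : ℝ // 0 ≤ t}, klRobustLoss p ℓ τ) = univ.sup' hne ℓ ∧
      Tendsto (klRobustLoss p ℓ) atTop (𝓝 (univ.sup' hne ℓ)) := by
  obtain ⟨c, -, hc⟩ := exists_mem_eq_sup' hne ℓ
  have upper (τ : ℝ) (hτ : 0 ≤ τ) : klRobustLoss p ℓ τ ≤ univ.sup' hne ℓ :=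
    klRobustLoss_le hp (fun c => le_sup' ℓ (mem_univ c)) hτ
  have lower (a : ℝ) (ha : a < univ.sup' hne ℓ) : ∀ᶠ τ in atTop, a < klRobustLoss p ℓ τ :=
    eventually_lt_klRobustLoss hp (hc ▸ ha)
  constructor
  · have : Nonempty {t : ℝ // 0 ≤ t} := ⟨⟨0, le_rfl⟩⟩
    refine ciSup_eq_of_forall_le_of_forall_lt_exists_gt (fun τ => upper τ τ.2) fun a ha => ?_
    obtain ⟨τ, haτ, hτ⟩ := ((lower a ha).and (eventually_ge_atTop 0)).exists
    exact ⟨⟨τ, hτ⟩, haτ⟩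
  · refine tendsto_order.2 ⟨lower, fun b hb => ?_⟩
    filter_upwards [eventually_ge_atTop 0] with τ hτ
    exact (upper τ hτ).trans_lt hb

end RobustLoss

/-- as the constraint becomes unbounded, the FAAL objective
recovers the worst-class loss:
`sup_{τ ≥ 0} L_FAAL(ℓ, τ) = lim_{τ → ∞} L_FAAL(ℓ, τ) = max_c ℓ_c`. -/
theorem faal_tendsto_worst_class (C : ℕ) (hC : 1 ≤ C) (ℓ : Fin C → ℝ) :
    (⨆ τ : {t : ℝ // 0 ≤ t}, faal C ℓ τ) =
      Finset.univ.sup' ⟨⟨0, hC⟩, Finset.mem_univ _⟩ ℓ ∧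
    Filter.Tendsto (fun τ : ℝ => faal C ℓ τ) Filter.atTop
      (nhds (Finset.univ.sup' ⟨⟨0, hC⟩, Finset.mem_univ _⟩ ℓ)) := by
  exact faal_tendsto_worst_class_general (uniform_mem_simplex (Nat.one_le_iff_ne_zero.1 hC)) _
end

section
/- KL-ball distributionally robust optimization duality (finite alphabet): for any C ≥ 1, any loss vector ℓ ∈ ℝ^C, and any τ > 0, sup{ Σ_c w_c ℓ_c : w ∈ Δ_C, KL(w‖U) ≤ τ } = inf_{λ > 0} [ λτ + λ·log( (1/C)·Σ_c exp(ℓ_c/λ) ) ]. -/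
open Real Finset

/-!
For a reference distribution `q` and a tilt `a`, let `qᵃ ∝ q · exp a`. Expanding logarithms gives
`KL(p‖qᵃ) = KL(p‖q) - ⟨p, a⟩ + log E_q[exp a]`. With `a = ℓ / λ`, the gap between the dual value at
`λ` and the primal value at `p` is therefore `λ (τ - KL(p‖q) + KL(p‖qᵃ))`, which is nonnegative for
feasible `p` (weak duality). At `p = qᵃ` the last term vanishes, so the gap becomes
`λ (τ - KL(qᵃ‖q))`. Moving `b = 1 / λ` continuously from `0`, either `KL(qᵃ‖q)` reaches `τ` and the
gap closes, or it stays below `τ` and the gap is at most `τ / b`, which is small for large `b`.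
-/

section

variable {ι : Type*} [Fintype ι] {p q a ℓ : ι → ℝ} {τ lam ε : ℝ}

/-- The relative entropy of `p` with respect to `q`, with real values. It agrees with `KL p q` only
if `q` is positive wherever `p` is; elsewhere `x / 0 = 0` makes the offending terms vanish. -/
noncomputable def relEntropy (p q : ι → ℝ) : ℝ :=
  ∑ c, p c * log (p c / q c)

lemma relEntropy_self (q : ι → ℝ) : relEntropy q q = 0 := by
  refine sum_eq_zero fun c _ => ?_
  rcases eq_or_ne (q c) 0 with hc | hc
  · rw [hc, zero_mul]
  · rw [div_self hc, log_one, mul_zero]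

lemma relEntropy_nonneg (hp : p ∈ stdSimplex ℝ ι) (hq : q ∈ stdSimplex ℝ ι)
    (hpq : ∀ c, 0 < p c → 0 < q c) : 0 ≤ relEntropy p q := by
  have hterm (c : ι) : p c - q c ≤ p c * log (p c / q c) := by
    rcases (hp.1 c).eq_or_lt with hc | hc
    · simpa [← hc] using hq.1 c
    · calc p c - q c = p c * (1 - (p c / q c)⁻¹) := by field_simp
        _ ≤ p c * log (p c / q c) :=
          mul_le_mul_of_nonneg_left (one_sub_inv_le_log_of_pos (div_pos hc (hpq c hc))) hc.le
  calc 0 = ∑ c, (p c - q c) := by rw [sum_sub_distrib, hp.2, hq.2, sub_self]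
    _ ≤ relEntropy p q := sum_le_sum fun c _ => hterm c

/-- The mean of `exp a` under `q`, the normalizing constant of `expTilt`. -/
noncomputable def expMean (q a : ι → ℝ) : ℝ :=
  ∑ c, q c * exp (a c)

lemma expMean_pos (hq : q ∈ stdSimplex ℝ ι) (a : ι → ℝ) : 0 < expMean q a := by
  obtain ⟨c, -, hc⟩ : ∃ c ∈ univ, 0 < q c :=
    exists_lt_of_sum_lt (by simp only [sum_const_zero, hq.2, zero_lt_one])
  exact sum_pos' (fun d _ => mul_nonneg (hq.1 d) (exp_pos _).le)
    ⟨c, mem_univ c, mul_pos hc (exp_pos _)⟩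

lemma continuous_expMean (q : ι → ℝ) : Continuous (expMean q) := by
  unfold expMean
  fun_prop

/-- The exponential tilt (Gibbs measure) of `q` by `a`, proportional to `q c * exp (a c)`. -/
noncomputable def expTilt (q a : ι → ℝ) : ι → ℝ :=
  fun c => q c * exp (a c) / expMean q a

lemma expTilt_zero (hq : q ∈ stdSimplex ℝ ι) : expTilt q 0 = q := by
  ext c
  simp [expTilt, expMean, hq.2]

lemma expTilt_mem_stdSimplex (hq : q ∈ stdSimplex ℝ ι) (a : ι → ℝ) :
    expTilt q a ∈ stdSimplex ℝ ι := by
  refine ⟨fun c => div_nonneg (mul_nonneg (hq.1 c) (exp_pos _).le) (expMean_pos hq a).le, ?_⟩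
  simp only [expTilt, ← sum_div]
  exact div_self (expMean_pos hq a).ne'

lemma expTilt_pos_iff (hq : q ∈ stdSimplex ℝ ι) {c : ι} : 0 < expTilt q a c ↔ 0 < q c := by
  rw [expTilt, div_pos_iff_of_pos_right (expMean_pos hq a), mul_pos_iff_of_pos_right (exp_pos _)]

lemma continuous_expTilt (hq : q ∈ stdSimplex ℝ ι) : Continuous (expTilt q) :=
  continuous_pi fun _ =>
    Continuous.div (by fun_prop) (continuous_expMean q) fun a => (expMean_pos hq a).ne'

lemma relEntropy_expTilt_right (hp : p ∈ stdSimplex ℝ ι) (hq : q ∈ stdSimplex ℝ ι)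
    (hpq : ∀ c, 0 < p c → 0 < q c) (a : ι → ℝ) :
    relEntropy p (expTilt q a) = relEntropy p q - p ⬝ᵥ a + log (expMean q a) := by
  have hterm (c : ι) : p c * log (p c / expTilt q a c) =
      p c * log (p c / q c) - p c * a c + p c * log (expMean q a) := by
    rcases (hp.1 c).eq_or_lt with hc | hc
    · simp only [← hc, zero_mul, sub_zero, add_zero]
    · have hqc := hpq c hc
      rw [log_div hc.ne' ((expTilt_pos_iff hq).2 hqc).ne', expTilt,
        log_div (mul_pos hqc (exp_pos _)).ne' (expMean_pos hq a).ne',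
        log_mul hqc.ne' (exp_pos _).ne', log_exp, log_div hc.ne' hqc.ne']
      ring
  simp only [relEntropy, dotProduct, hterm, sum_add_distrib, sum_sub_distrib, ← sum_mul, hp.2,
    one_mul]

lemma relEntropy_expTilt_left (hq : q ∈ stdSimplex ℝ ι) (a : ι → ℝ) :
    relEntropy (expTilt q a) q = expTilt q a ⬝ᵥ a - log (expMean q a) := by
  have h := relEntropy_expTilt_right (expTilt_mem_stdSimplex hq a) hq
    (fun _ => (expTilt_pos_iff hq).1) a
  rw [relEntropy_self] at h
  linarith

lemma relEntropy_expTilt_left_nonneg (hq : q ∈ stdSimplex ℝ ι) (a : ι → ℝ) :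
    0 ≤ relEntropy (expTilt q a) q :=
  relEntropy_nonneg (expTilt_mem_stdSimplex hq a) hq fun _ => (expTilt_pos_iff hq).1

lemma continuous_relEntropy_expTilt_left (hq : q ∈ stdSimplex ℝ ι) :
    Continuous fun a => relEntropy (expTilt q a) q := by
  simp only [relEntropy_expTilt_left hq]
  exact ((continuous_expTilt hq).dotProduct continuous_id).sub
    ((continuous_expMean q).log fun a => (expMean_pos hq a).ne')

/-- The distributions within relative entropy `τ` of `q`, the feasible set of the primal problem.
Absolute continuity is required separately because `relEntropy` does not detect its failure. -/
def klBall (q : ι → ℝ) (τ : ℝ) : Set (ι → ℝ) :=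
  {p | p ∈ stdSimplex ℝ ι ∧ (∀ c, 0 < p c → 0 < q c) ∧ relEntropy p q ≤ τ}

lemma self_mem_klBall (hq : q ∈ stdSimplex ℝ ι) (hτ : 0 ≤ τ) : q ∈ klBall q τ :=
  ⟨hq, fun _ => id, (relEntropy_self q).trans_le hτ⟩

lemma expTilt_mem_klBall (hq : q ∈ stdSimplex ℝ ι) (h : relEntropy (expTilt q a) q ≤ τ) :
    expTilt q a ∈ klBall q τ :=
  ⟨expTilt_mem_stdSimplex hq a, fun _ => (expTilt_pos_iff hq).1, h⟩

/-- The Lagrangian dual objective `λτ + λ log E_q[exp (ℓ / λ)]` of maximizing `p ⬝ᵥ ℓ` over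
`klBall q τ`, where `lam` is the multiplier of the entropy constraint. -/
noncomputable def klDual (q ℓ : ι → ℝ) (τ lam : ℝ) : ℝ :=
  lam * τ + lam * log (expMean q (lam⁻¹ • ℓ))

lemma klDual_sub_dotProduct (hp : p ∈ stdSimplex ℝ ι) (hq : q ∈ stdSimplex ℝ ι)
    (hpq : ∀ c, 0 < p c → 0 < q c) (hlam : lam ≠ 0) :
    klDual q ℓ τ lam - p ⬝ᵥ ℓ =
      lam * (τ - relEntropy p q + relEntropy p (expTilt q (lam⁻¹ • ℓ))) := by
  rw [relEntropy_expTilt_right hp hq hpq, dotProduct_smul, smul_eq_mul, klDual]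
  field_simp
  ring

lemma dotProduct_le_klDual (hq : q ∈ stdSimplex ℝ ι) (hp : p ∈ klBall q τ) (hlam : 0 < lam) :
    p ⬝ᵥ ℓ ≤ klDual q ℓ τ lam := by
  obtain ⟨hp, hpq, hpτ⟩ := hp
  have hnonneg : 0 ≤ relEntropy p (expTilt q (lam⁻¹ • ℓ)) :=
    relEntropy_nonneg hp (expTilt_mem_stdSimplex hq _) fun c hc => (expTilt_pos_iff hq).2 (hpq c hc)
  rw [← sub_nonneg, klDual_sub_dotProduct hp hq hpq hlam.ne']
  exact mul_nonneg hlam.le (add_nonneg (sub_nonneg.2 hpτ) hnonneg)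

lemma klDual_sub_expTilt_dotProduct (hq : q ∈ stdSimplex ℝ ι) (hlam : lam ≠ 0) :
    klDual q ℓ τ lam - expTilt q (lam⁻¹ • ℓ) ⬝ᵥ ℓ =
      lam * (τ - relEntropy (expTilt q (lam⁻¹ • ℓ)) q) := by
  rw [klDual_sub_dotProduct (expTilt_mem_stdSimplex hq _) hq (fun _ => (expTilt_pos_iff hq).1) hlam,
    relEntropy_self, add_zero]

lemma exists_pos_le_and_sub_le_mul {f : ℝ → ℝ} (hf : Continuous f) (hnonneg : ∀ b, 0 ≤ f b)
    (hτ : f 0 < τ) (hε : 0 < ε) : ∃ b, 0 < b ∧ f b ≤ τ ∧ τ - f b ≤ b * ε := by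
  have hB : 0 < τ / ε := div_pos ((hnonneg 0).trans_lt hτ) hε
  rcases le_total (f (τ / ε)) τ with hle | hge
  · refine ⟨τ / ε, hB, hle, ?_⟩
    rw [div_mul_cancel₀ τ hε.ne']
    exact sub_le_self τ (hnonneg _)
  · obtain ⟨b, ⟨hb, -⟩, rfl⟩ := intermediate_value_Ioc hB.le hf.continuousOn ⟨hτ, hge⟩
    exact ⟨b, hb, le_rfl, (sub_self (f b)).trans_le (mul_pos hb hε).le⟩

lemma exists_klDual_le_dotProduct_add_of_pos (hq : q ∈ stdSimplex ℝ ι) (ℓ : ι → ℝ) (hτ : 0 < τ)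
    (hε : 0 < ε) : ∃ p ∈ klBall q τ, ∃ lam, 0 < lam ∧ klDual q ℓ τ lam ≤ p ⬝ᵥ ℓ + ε := by
  have hcont : Continuous fun b : ℝ => relEntropy (expTilt q (b • ℓ)) q :=
    (continuous_relEntropy_expTilt_left hq).comp (by fun_prop : Continuous fun b : ℝ => b • ℓ)
  have hzero : relEntropy (expTilt q ((0 : ℝ) • ℓ)) q < τ := by
    rwa [zero_smul, expTilt_zero hq, relEntropy_self]
  obtain ⟨b, hb, hle, hgap⟩ := exists_pos_le_and_sub_le_mul hcont
    (fun b => relEntropy_expTilt_left_nonneg hq _) hzero hε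
  refine ⟨_, expTilt_mem_klBall hq hle, b⁻¹, inv_pos.2 hb, ?_⟩
  have hdual := klDual_sub_expTilt_dotProduct (ℓ := ℓ) (τ := τ) hq (inv_ne_zero hb.ne')
  rw [inv_inv] at hdual
  rw [← sub_le_iff_le_add', hdual]
  exact (inv_mul_le_iff₀ hb).2 hgap

-- The ball of radius `0` is `{q}`, and no multiplier need attain the infimum: take `λ → ∞`.
lemma exists_klDual_zero_le_dotProduct_add (hq : q ∈ stdSimplex ℝ ι) (ℓ : ι → ℝ) (hε : 0 < ε) :
    ∃ lam, 0 < lam ∧ klDual q ℓ 0 lam ≤ q ⬝ᵥ ℓ + ε := by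
  have hcont : Continuous fun b : ℝ => expTilt q (b • ℓ) ⬝ᵥ ℓ :=
    ((continuous_expTilt hq).comp (by fun_prop : Continuous fun b : ℝ => b • ℓ)).dotProduct
      continuous_const
  have hzero : expTilt q ((0 : ℝ) • ℓ) ⬝ᵥ ℓ < q ⬝ᵥ ℓ + ε := by
    rw [zero_smul, expTilt_zero hq]
    exact lt_add_of_pos_right _ hε
  have hnear : ∀ᶠ b in nhdsWithin (0 : ℝ) (Set.Ioi 0), expTilt q (b • ℓ) ⬝ᵥ ℓ < q ⬝ᵥ ℓ + ε :=
    nhdsWithin_le_nhds ((hcont.tendsto 0).eventually_lt_const hzero)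
  obtain ⟨b, hlt, hb⟩ := (hnear.and self_mem_nhdsWithin).exists
  refine ⟨b⁻¹, inv_pos.2 hb, ?_⟩
  have hdual := klDual_sub_expTilt_dotProduct (ℓ := ℓ) (τ := 0) hq (inv_ne_zero (ne_of_gt hb))
  rw [inv_inv, zero_sub] at hdual
  have hgap : b⁻¹ * -relEntropy (expTilt q (b • ℓ)) q ≤ 0 :=
    mul_nonpos_of_nonneg_of_nonpos (inv_pos.2 hb).le
      (neg_nonpos.2 (relEntropy_expTilt_left_nonneg hq _))
  linarith

lemma exists_klDual_le_dotProduct_add (hq : q ∈ stdSimplex ℝ ι) (ℓ : ι → ℝ) (hτ : 0 ≤ τ)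
    (hε : 0 < ε) : ∃ p ∈ klBall q τ, ∃ lam, 0 < lam ∧ klDual q ℓ τ lam ≤ p ⬝ᵥ ℓ + ε := by
  rcases hτ.eq_or_lt with rfl | hτ
  · exact ⟨q, self_mem_klBall hq le_rfl, exists_klDual_zero_le_dotProduct_add hq ℓ hε⟩
  · exact exists_klDual_le_dotProduct_add_of_pos hq ℓ hτ hε

lemma sSup_eq_sInf_of_forall_le_add {S T : Set ℝ} (hST : ∀ s ∈ S, ∀ t ∈ T, s ≤ t)
    (hgap : ∀ ε > 0, ∃ s ∈ S, ∃ t ∈ T, t ≤ s + ε) : sSup S = sInf T := by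
  obtain ⟨s₀, hs₀, t₀, ht₀, -⟩ := hgap 1 one_pos
  refine le_antisymm
    (csSup_le ⟨s₀, hs₀⟩ fun s hs => le_csInf ⟨t₀, ht₀⟩ fun t ht => hST s hs t ht)
    (le_of_forall_pos_le_add fun ε hε => ?_)
  obtain ⟨s, hs, t, ht, hts⟩ := hgap ε hε
  calc sInf T ≤ t := csInf_le ⟨s, fun t ht => hST s hs t ht⟩ ht
    _ ≤ s + ε := hts
    _ ≤ sSup S + ε := by gcongr; exact le_csSup ⟨t, fun s hs => hST s hs t ht⟩ hs

theorem kl_dro_duality_general (hq : q ∈ stdSimplex ℝ ι) (ℓ : ι → ℝ) (hτ : 0 ≤ τ) :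
    sSup {s | ∃ p ∈ klBall q τ, s = ∑ c, p c * ℓ c} =
      sInf {v | ∃ lam : ℝ, 0 < lam ∧ v = klDual q ℓ τ lam} := by
  refine sSup_eq_sInf_of_forall_le_add ?_ fun ε hε => ?_
  · rintro _ ⟨p, hp, rfl⟩ _ ⟨lam, hlam, rfl⟩
    exact dotProduct_le_klDual hq hp hlam
  · obtain ⟨p, hp, lam, hlam, hle⟩ := exists_klDual_le_dotProduct_add hq ℓ hτ hε
    exact ⟨_, ⟨p, hp, rfl⟩, _, ⟨lam, hlam, rfl⟩, hle⟩

end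

lemma mem_klBall_iff {C : ℕ} {p q : Fin C → ℝ} {τ : ℝ} :
    p ∈ klBall q τ ↔ p ∈ simplex C ∧ KL p q ≤ (τ : EReal) := by
  refine and_congr_right fun _ => ?_
  unfold KL
  split_ifs with hpq
  · exact (and_iff_right hpq).trans EReal.coe_le_coe_iff.symm
  · simp [hpq]

lemma uniform_mem_stdSimplex {C : ℕ} (hC : 1 ≤ C) : uniform C ∈ stdSimplex ℝ (Fin C) := by
  have hC₀ : (C : ℝ) ≠ 0 := by positivity
  exact ⟨fun _ => one_div_nonneg.2 C.cast_nonneg, by simp [uniform, hC₀]⟩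

lemma klDual_uniform {C : ℕ} (ℓ : Fin C → ℝ) (τ lam : ℝ) :
    klDual (uniform C) ℓ τ lam =
      lam * τ + lam * log ((1 / (C : ℝ)) * ∑ c, exp (ℓ c / lam)) := by
  simp only [klDual, expMean, uniform, ← mul_sum, Pi.smul_apply, smul_eq_mul, inv_mul_eq_div]

/-- KL-ball distributionally robust optimization duality on a
finite alphabet: for `τ > 0`,
`sup{ Σ_c w_c ℓ_c : w ∈ Δ_C, KL(w‖U) ≤ τ } =
  inf_{λ > 0} [ λτ + λ·log((1/C)·Σ_c exp(ℓ_c/λ)) ]`. -/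
theorem kl_dro_duality (C : ℕ) (hC : 1 ≤ C) (ℓ : Fin C → ℝ) (τ : ℝ) (hτ : 0 < τ) :
    sSup {s | ∃ w ∈ simplex C, KL w (uniform C) ≤ (τ : EReal) ∧ s = ∑ c, w c * ℓ c} =
      sInf {v | ∃ lam : ℝ, 0 < lam ∧
        v = lam * τ + lam * Real.log ((1 / (C : ℝ)) * ∑ c, Real.exp (ℓ c / lam))} := by
  simpa only [mem_klBall_iff, and_assoc, klDual_uniform] using
    kl_dro_duality_general (uniform_mem_stdSimplex hC) ℓ hτ.le
end

section
/- Asymptotic form of the paper's Theorem 1: fix C ≥ 1, τ > 0, and a loss vector ℓ ∈ ℝ^C, and let L_FAAL = sup{ Σ_c w_c ℓ_c : w ∈ Δ_C, KL(w‖U) ≤ τ }. With Y_1, …, Y_n i.i.d. uniform on {1, …, C} and L̂_n = (1/n)·Σ_{i=1}^n ℓ(Y_i), for every ε ∈ (0, τ) there exists N such that for all n ≥ N, Pr( L̂_n > L_FAAL ) ≤ exp(−n·(τ − ε)); in particular Pr( L̂_n ≤ L_FAAL ) → 1 as n → ∞, i.e., the failure probability is e^{−τn + o(n)}. -/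
open Real Finset

open MeasureTheory ENNReal

/-!
Condition an i.i.d. sample from `q` on an event `S`, and let `w` be the conditional expectation of
its empirical distribution. Reweighting each sequence by `∏ w (f i) / q (f i)` turns `q`-likelihood
into `w`-likelihood, which has total mass at most one on `S`, so Jensen's inequality for `exp` gives
`Pr(S) ≤ exp (-n * KL(w‖q))` (Csiszár). If `S` is the event `L_FAAL < L̂_n`, then `w` is an average
of distributions of mean loss above `L_FAAL`, hence is one itself, and so `KL(w‖q) > τ` by the
definition of `L_FAAL` as a supremum. This yields `exp (-n * τ)` with no loss in the exponent.
-/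

section WeightedSums

variable {ι κ α : Type*}

theorem sum_mul_exp_centerMass_le {s : Finset κ} {p : κ → ℝ} (hp : ∀ k ∈ s, 0 ≤ p k)
    (hpos : 0 < ∑ k ∈ s, p k) (x : κ → ℝ) :
    (∑ k ∈ s, p k) * Real.exp (s.centerMass p x) ≤ ∑ k ∈ s, p k * Real.exp (x k) := by
  have jensen : Real.exp (s.centerMass p x) ≤ s.centerMass p fun k => Real.exp (x k) :=
    convexOn_exp.map_centerMass_le hp hpos fun _ _ => Set.mem_univ _
  calc (∑ k ∈ s, p k) * Real.exp (s.centerMass p x)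
      ≤ (∑ k ∈ s, p k) * s.centerMass p fun k => Real.exp (x k) := by gcongr
    _ = ∑ k ∈ s, p k * Real.exp (x k) := by
      simp only [centerMass, smul_eq_mul, mul_inv_cancel_left₀ hpos.ne']

theorem centerMass_dotProduct [Fintype α] {𝕜 : Type*} [Field 𝕜] (s : Finset κ) (p : κ → 𝕜)
    (z : κ → α → 𝕜) (g : α → 𝕜) :
    s.centerMass p z ⬝ᵥ g = s.centerMass p fun k => z k ⬝ᵥ g := by
  simp only [centerMass, smul_dotProduct, sum_dotProduct]

theorem convex_setOf_lt_dotProduct [Fintype α] (g : α → ℝ) (r : ℝ) :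
    Convex ℝ {w | r < w ⬝ᵥ g} :=
  convex_halfSpace_gt ⟨fun v w => add_dotProduct v w g, fun a w => smul_dotProduct a w g⟩ r

variable [Fintype ι]

theorem prod_mul_exp_sum_log_div_le {q w : α → ℝ} (hq : ∀ a, 0 ≤ q a) (hw : ∀ a, 0 ≤ w a)
    {f : ι → α} (hf : 0 < ∏ i, q (f i) → ∀ i, 0 < w (f i)) :
    (∏ i, q (f i)) * Real.exp (∑ i, Real.log (w (f i) / q (f i))) ≤ ∏ i, w (f i) := by
  rcases (prod_nonneg fun i _ => hq (f i)).eq_or_lt with hzero | hpos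
  · rw [← hzero, zero_mul]
    exact prod_nonneg fun _ _ => hw _
  · have hqpos (i : ι) : 0 < q (f i) :=
      (hq _).lt_of_ne' (prod_ne_zero_iff.mp hpos.ne' i (mem_univ i))
    rw [Real.exp_sum, ← prod_mul_distrib]
    refine (prod_congr rfl fun i _ => ?_).le
    rw [Real.exp_log (div_pos (hf hpos i) (hqpos i)), mul_div_cancel₀ _ (hqpos i).ne']

theorem sum_prod_le_one [Fintype α] {w : α → ℝ} (hw : w ∈ stdSimplex ℝ α) (S : Finset (ι → α)) :
    ∑ f ∈ S, ∏ i, w (f i) ≤ 1 := by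
  classical
  calc ∑ f ∈ S, ∏ i, w (f i) ≤ ∑ f : ι → α, ∏ i, w (f i) :=
        sum_le_univ_sum_of_nonneg fun _ => prod_nonneg fun _ _ => hw.1 _
    _ = (∑ a, w a) ^ Fintype.card ι := by
        rw [← Fintype.piFinset_univ, sum_prod_piFinset, prod_const, card_univ]
    _ = 1 := by rw [hw.2, one_pow]

end WeightedSums

section Empirical

variable {ι α : Type*} [Fintype ι] [DecidableEq α]

/-- The empirical distribution (type) of the sequence `f`: the average of the point masses at its
entries, or the zero vector if `ι` is empty. -/
noncomputable def empirical (f : ι → α) : α → ℝ :=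
  univ.centerMass (fun _ => (1 : ℝ)) fun i => Pi.single (f i) 1

theorem empirical_apply (f : ι → α) (a : α) :
    empirical f a = (Fintype.card ι : ℝ)⁻¹ * #{i | f i = a} := by
  simp [empirical, centerMass, Finset.sum_apply, Pi.single_apply, eq_comm]

theorem empirical_nonneg (f : ι → α) (a : α) : 0 ≤ empirical f a := by
  rw [empirical_apply]
  positivity

theorem empirical_apply_ne_zero_iff {f : ι → α} {a : α} : empirical f a ≠ 0 ↔ ∃ i, f i = a := by
  rw [empirical_apply, mul_ne_zero_iff, Nat.cast_ne_zero, card_ne_zero, filter_nonempty_iff]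
  simp only [mem_univ, true_and, and_iff_right_iff_imp]
  rintro ⟨i, -⟩
  have : Nonempty ι := ⟨i⟩
  positivity

/-- The conditional expectation, given `S`, of the empirical distribution of an i.i.d. sample
from `q`. The weights `∏ i, q (f i)` are normalised by `centerMass`, so the value is `0` when `S`
has probability zero. -/
noncomputable def meanEmpirical (q : α → ℝ) (S : Finset (ι → α)) : α → ℝ :=
  S.centerMass (fun f => ∏ i, q (f i)) empirical

variable {q : α → ℝ} {S : Finset (ι → α)}

theorem meanEmpirical_mem_of_convex {K : Set (α → ℝ)} (hK : Convex ℝ K) (hq : ∀ a, 0 ≤ q a)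
    (hpos : 0 < ∑ f ∈ S, ∏ i, q (f i)) (hS : ∀ f ∈ S, empirical f ∈ K) :
    meanEmpirical q S ∈ K :=
  hK.centerMass_mem (fun _ _ => prod_nonneg fun _ _ => hq _) hpos hS

theorem meanEmpirical_apply (q : α → ℝ) (S : Finset (ι → α)) (a : α) :
    meanEmpirical q S a =
      (∑ f ∈ S, ∏ i, q (f i))⁻¹ * ∑ f ∈ S, (∏ i, q (f i)) * empirical f a := by
  simp only [meanEmpirical, centerMass, Pi.smul_apply, Finset.sum_apply, smul_eq_mul]

theorem pos_of_meanEmpirical_pos {a : α} (hq : 0 ≤ q a) (ha : 0 < meanEmpirical q S a) :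
    0 < q a := by
  rw [meanEmpirical_apply] at ha
  obtain ⟨f, -, hf⟩ := exists_ne_zero_of_sum_ne_zero (right_ne_zero_of_mul ha.ne')
  obtain ⟨i, rfl⟩ := empirical_apply_ne_zero_iff.mp (right_ne_zero_of_mul hf)
  exact hq.lt_of_ne' (prod_ne_zero_iff.mp (left_ne_zero_of_mul hf) i (mem_univ i))

theorem meanEmpirical_apply_pos (hq : ∀ a, 0 ≤ q a) {f : ι → α} (hfS : f ∈ S)
    (hf : 0 < ∏ i, q (f i)) (i : ι) : 0 < meanEmpirical q S (f i) := by
  have hprod (g : ι → α) : 0 ≤ ∏ i, q (g i) := prod_nonneg fun _ _ => hq _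
  have hemp : 0 < empirical f (f i) :=
    (empirical_nonneg f _).lt_of_ne' (empirical_apply_ne_zero_iff.mpr ⟨i, rfl⟩)
  rw [meanEmpirical_apply]
  exact mul_pos (inv_pos.mpr (sum_pos' (fun g _ => hprod g) ⟨f, hfS, hf⟩))
    (sum_pos' (fun g _ => mul_nonneg (hprod g) (empirical_nonneg g _)) ⟨f, hfS, mul_pos hf hemp⟩)

variable [Fintype α]

theorem empirical_mem_stdSimplex [Nonempty ι] (f : ι → α) : empirical f ∈ stdSimplex ℝ α :=
  (convex_stdSimplex ℝ α).centerMass_mem (fun _ _ => zero_le_one) (by simp [Fintype.card_pos])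
    fun _ _ => single_mem_stdSimplex ℝ _

theorem empirical_dotProduct (f : ι → α) (g : α → ℝ) :
    empirical f ⬝ᵥ g = (Fintype.card ι : ℝ)⁻¹ * ∑ i, g (f i) := by
  rw [empirical, centerMass_dotProduct]
  simp [centerMass]

theorem card_mul_empirical_dotProduct (f : ι → α) (g : α → ℝ) :
    Fintype.card ι * (empirical f ⬝ᵥ g) = ∑ i, g (f i) := by
  rcases isEmpty_or_nonempty ι with hι | hι
  · simp
  · rw [empirical_dotProduct, mul_inv_cancel_left₀ (by positivity)]

theorem centerMass_sum_eq_card_mul_meanEmpirical_dotProduct (q : α → ℝ) (S : Finset (ι → α))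
    (g : α → ℝ) :
    S.centerMass (fun f => ∏ i, q (f i)) (fun f => ∑ i, g (f i)) =
      Fintype.card ι * (meanEmpirical q S ⬝ᵥ g) := by
  simp only [← card_mul_empirical_dotProduct, meanEmpirical, centerMass_dotProduct,
    ← smul_eq_mul (Fintype.card ι : ℝ), centerMass_smul]

theorem sum_prod_le_exp_neg_meanEmpirical [Nonempty ι] (hq : ∀ a, 0 ≤ q a)
    (hpos : 0 < ∑ f ∈ S, ∏ i, q (f i)) :
    ∑ f ∈ S, ∏ i, q (f i) ≤ Real.exp (-(Fintype.card ι *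
      ∑ a, meanEmpirical q S a * Real.log (meanEmpirical q S a / q a))) := by
  set w := meanEmpirical q S
  have hw : w ∈ stdSimplex ℝ α := meanEmpirical_mem_of_convex (convex_stdSimplex ℝ α) hq hpos
    fun f _ => empirical_mem_stdSimplex f
  rw [Real.exp_neg, le_inv_comm₀ hpos (Real.exp_pos _), ← one_div, le_div_iff₀' hpos]
  calc (∑ f ∈ S, ∏ i, q (f i)) * Real.exp (Fintype.card ι * ∑ a, w a * Real.log (w a / q a))
      = (∑ f ∈ S, ∏ i, q (f i)) * Real.exp (S.centerMass (fun f => ∏ i, q (f i))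
          fun f => ∑ i, Real.log (w (f i) / q (f i))) := by
        rw [centerMass_sum_eq_card_mul_meanEmpirical_dotProduct q S fun a => Real.log (w a / q a)]
        rfl
    _ ≤ ∑ f ∈ S, (∏ i, q (f i)) * Real.exp (∑ i, Real.log (w (f i) / q (f i))) :=
        sum_mul_exp_centerMass_le (fun _ _ => prod_nonneg fun _ _ => hq _) hpos _
    _ ≤ ∑ f ∈ S, ∏ i, w (f i) := sum_le_sum fun f hfS =>
        prod_mul_exp_sum_log_div_le hq hw.1 fun hf => meanEmpirical_apply_pos hq hfS hf
    _ ≤ 1 := sum_prod_le_one hw S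

end Empirical

section ConvexSanov

variable {ι : Type*} [Fintype ι] [Nonempty ι] {C : ℕ} {q : Fin C → ℝ} {τ : ℝ}

theorem KL_eq_coe {p : Fin C → ℝ} (h : ∀ c, 0 < p c → 0 < q c) :
    KL p q = ((∑ c, p c * Real.log (p c / q c) : ℝ) : EReal) :=
  if_pos h

theorem sum_prod_le_exp_of_le_KL {K : Set (Fin C → ℝ)} (hK : Convex ℝ K) (hq : ∀ c, 0 ≤ q c)
    (hKL : ∀ w ∈ simplex C ∩ K, (τ : EReal) ≤ KL w q) {S : Finset (ι → Fin C)}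
    (hS : ∀ f ∈ S, empirical f ∈ K) :
    ∑ f ∈ S, ∏ i, q (f i) ≤ Real.exp (-(Fintype.card ι * τ)) := by
  rcases le_or_gt (∑ f ∈ S, ∏ i, q (f i)) 0 with hzero | hpos
  · exact hzero.trans (Real.exp_pos _).le
  have hmem : meanEmpirical q S ∈ simplex C ∩ K :=
    meanEmpirical_mem_of_convex ((convex_stdSimplex ℝ (Fin C)).inter hK) hq hpos
      fun f hf => ⟨empirical_mem_stdSimplex f, hS f hf⟩
  have hτ := hKL _ hmem
  rw [KL_eq_coe fun c => pos_of_meanEmpirical_pos (hq c), EReal.coe_le_coe_iff] at hτ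
  exact (sum_prod_le_exp_neg_meanEmpirical hq hpos).trans (by gcongr)

end ConvexSanov

section RobustRisk

variable {C : ℕ}

/-- The distributionally robust risk: the largest mean loss over the distributions in the KL ball of
radius `τ` around `q`. The `L_FAAL` of the theorem is the case `q = uniform C`, with the arguments
of the divergence in the opposite order to those in `faal`. If the ball is empty, the value is
`0`. -/
noncomputable def robustRisk (q ℓ : Fin C → ℝ) (τ : ℝ) : ℝ :=
  sSup {s | ∃ w ∈ simplex C, KL w q ≤ (τ : EReal) ∧ s = ∑ c, w c * ℓ c}

theorem le_robustRisk {q w ℓ : Fin C → ℝ} {τ : ℝ} (hw : w ∈ simplex C) (hKL : KL w q ≤ τ) :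
    w ⬝ᵥ ℓ ≤ robustRisk q ℓ τ := by
  have hcompact : IsCompact ((fun w => w ⬝ᵥ ℓ) '' simplex C) :=
    (isCompact_stdSimplex ℝ (Fin C)).image (by fun_prop)
  refine le_csSup (hcompact.bddAbove.mono ?_) ⟨w, hw, hKL, rfl⟩
  rintro _ ⟨v, hv, -, rfl⟩
  exact ⟨v, hv, rfl⟩

end RobustRisk

section IID

variable {Ω : Type*} [MeasurableSpace Ω] {μ : Measure Ω}

theorem measure_mem_le_sum_prod {ι α : Type*} [Fintype ι] {q : α → ℝ} (hq : ∀ a, 0 ≤ q a)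
    {Y : ι → Ω → α}
    (hlaw : ∀ f : ι → α, μ {ω | ∀ i, Y i ω = f i} = ∏ i, ENNReal.ofReal (q (f i)))
    (S : Finset (ι → α)) :
    μ {ω | (fun i => Y i ω) ∈ S} ≤ ENNReal.ofReal (∑ f ∈ S, ∏ i, q (f i)) := by
  calc μ {ω | (fun i => Y i ω) ∈ S} ≤ μ (⋃ f ∈ S, {ω | ∀ i, Y i ω = f i}) :=
        measure_mono fun ω hω => Set.mem_biUnion hω fun _ => rfl
    _ ≤ ∑ f ∈ S, μ {ω | ∀ i, Y i ω = f i} := measure_biUnion_finset_le _ _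
    _ = ENNReal.ofReal (∑ f ∈ S, ∏ i, q (f i)) := by
        rw [ENNReal.ofReal_sum_of_nonneg fun _ _ => prod_nonneg fun _ _ => hq _]
        simp only [hlaw, ENNReal.ofReal_prod_of_nonneg fun _ _ => hq _]

theorem measure_robustRisk_lt_le [IsProbabilityMeasure μ] {ι : Type*} [Fintype ι] {C : ℕ}
    {q : Fin C → ℝ} (hq : ∀ c, 0 ≤ q c) {Y : ι → Ω → Fin C}
    (hlaw : ∀ f : ι → Fin C, μ {ω | ∀ i, Y i ω = f i} = ∏ i, ENNReal.ofReal (q (f i)))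
    (ℓ : Fin C → ℝ) (τ : ℝ) :
    μ {ω | robustRisk q ℓ τ < (Fintype.card ι : ℝ)⁻¹ * ∑ i, ℓ (Y i ω)} ≤
      ENNReal.ofReal (Real.exp (-(Fintype.card ι * τ))) := by
  classical
  rcases isEmpty_or_nonempty ι with hι | hι
  · simpa using prob_le_one
  let S : Finset (ι → Fin C) := {f | robustRisk q ℓ τ < empirical f ⬝ᵥ ℓ}
  have hKL : ∀ w ∈ simplex C ∩ {w | robustRisk q ℓ τ < w ⬝ᵥ ℓ}, (τ : EReal) ≤ KL w q :=
    fun w ⟨hw, hlt⟩ => le_of_not_ge fun hle => hlt.not_ge (le_robustRisk hw hle)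
  calc μ {ω | robustRisk q ℓ τ < (Fintype.card ι : ℝ)⁻¹ * ∑ i, ℓ (Y i ω)}
      = μ {ω | (fun i => Y i ω) ∈ S} := by
        simp only [S, mem_filter, mem_univ, true_and, empirical_dotProduct]
    _ ≤ ENNReal.ofReal (∑ f ∈ S, ∏ i, q (f i)) := measure_mem_le_sum_prod hq hlaw S
    _ ≤ ENNReal.ofReal (Real.exp (-(Fintype.card ι * τ))) :=
        ENNReal.ofReal_le_ofReal <| sum_prod_le_exp_of_le_KL (convex_setOf_lt_dotProduct ℓ _) hq
          hKL fun f hf => (mem_filter.mp hf).2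

end IID

theorem tendsto_measure_one_of_tendsto_compl_zero {κ : Type*} {l : Filter κ} {Ω : κ → Type*}
    [∀ k, MeasurableSpace (Ω k)] {μ : ∀ k, Measure (Ω k)} [∀ k, IsProbabilityMeasure (μ k)]
    {s : ∀ k, Set (Ω k)} (h : Filter.Tendsto (fun k => μ k (s k)ᶜ) l (nhds 0)) :
    Filter.Tendsto (fun k => μ k (s k)) l (nhds 1) := by
  have hsub : Filter.Tendsto (fun k => 1 - μ k (s k)ᶜ) l (nhds 1) := by
    simpa using ENNReal.Tendsto.sub tendsto_const_nhds h (Or.inl ENNReal.one_ne_top)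
  refine tendsto_of_tendsto_of_tendsto_of_le_of_le hsub tendsto_const_nhds (fun k => ?_)
    fun k => prob_le_one
  rw [tsub_le_iff_right, ← measure_univ (μ := μ k), ← Set.union_compl_self (s k)]
  exact measure_union_le _ _

theorem tendsto_ofReal_exp_neg_natCast_mul {τ : ℝ} (hτ : 0 < τ) :
    Filter.Tendsto (fun n : ℕ => ENNReal.ofReal (Real.exp (-(n : ℝ) * τ))) Filter.atTop
      (nhds 0) := by
  have hexp : Filter.Tendsto (fun n : ℕ => Real.exp (-(n : ℝ) * τ)) Filter.atTop (nhds 0) :=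
    Real.tendsto_exp_atBot.comp
      ((Filter.tendsto_neg_atTop_atBot.comp tendsto_natCast_atTop_atTop).atBot_mul_const hτ)
  simpa using ENNReal.tendsto_ofReal hexp

theorem faal_generalization_asymptotic_general {Ω : ℕ → Type*}
    [∀ n, MeasurableSpace (Ω n)] (μ : ∀ n, Measure (Ω n))
    [∀ n, IsProbabilityMeasure (μ n)] {C : ℕ} {q : Fin C → ℝ} (hq : ∀ c, 0 ≤ q c)
    (Y : ∀ n, Fin n → Ω n → Fin C)
    (hiid : ∀ n, ∀ f : Fin n → Fin C,
      μ n {ω | ∀ i, Y n i ω = f i} = ∏ i, ENNReal.ofReal (q (f i)))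
    (ℓ : Fin C → ℝ) {τ : ℝ} (hτ : 0 < τ) :
    (∀ n, μ n {ω | robustRisk q ℓ τ < (1 / (n : ℝ)) * ∑ i, ℓ (Y n i ω)} ≤
      ENNReal.ofReal (Real.exp (-(n : ℝ) * τ))) ∧
    Filter.Tendsto (fun n => μ n {ω | (1 / (n : ℝ)) * ∑ i, ℓ (Y n i ω) ≤ robustRisk q ℓ τ})
      Filter.atTop (nhds 1) := by
  have hfail (n : ℕ) : μ n {ω | robustRisk q ℓ τ < (1 / (n : ℝ)) * ∑ i, ℓ (Y n i ω)} ≤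
      ENNReal.ofReal (Real.exp (-(n : ℝ) * τ)) := by
    simpa using measure_robustRisk_lt_le hq (hiid n) ℓ τ
  refine ⟨hfail, tendsto_measure_one_of_tendsto_compl_zero ?_⟩
  simp only [Set.compl_ofPred, not_le]
  exact tendsto_of_tendsto_of_tendsto_of_le_of_le tendsto_const_nhds
    (tendsto_ofReal_exp_neg_natCast_mul hτ) (fun _ => zero_le) hfail

/-- asymptotic form of the paper's Theorem 1.  For each `n`, let
`Y_1, …, Y_n` be i.i.d. uniform class labels (on some probability space
`Ω n`), and let `L̂_n = (1/n)·Σ_i ℓ(Y_i)`.  Then for every `ε ∈ (0, τ)` the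
failure probability `Pr(L̂_n > L_FAAL)` is eventually at most `exp(−n(τ − ε))`;
in particular `Pr(L̂_n ≤ L_FAAL) → 1`. -/
theorem faal_generalization_asymptotic {Ω : ℕ → Type*}
    [∀ n, MeasurableSpace (Ω n)] (μ : ∀ n, Measure (Ω n))
    [∀ n, IsProbabilityMeasure (μ n)] (C : ℕ) (hC : 1 ≤ C)
    (Y : ∀ n, Fin n → Ω n → Fin C) (hmeas : ∀ n i, Measurable (Y n i))
    (hiid : ∀ n, ∀ f : Fin n → Fin C,
      μ n {ω | ∀ i, Y n i ω = f i} = ∏ i, ENNReal.ofReal (uniform C (f i)))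
    (ℓ : Fin C → ℝ) (τ : ℝ) (hτ : 0 < τ) :
    (∀ ε : ℝ, ε ∈ Set.Ioo 0 τ → ∃ N : ℕ, ∀ n ≥ N,
      μ n {ω | sSup {s | ∃ w ∈ simplex C, KL w (uniform C) ≤ (τ : EReal) ∧
            s = ∑ c, w c * ℓ c} < (1 / (n : ℝ)) * ∑ i, ℓ (Y n i ω)} ≤
        ENNReal.ofReal (Real.exp (-(n : ℝ) * (τ - ε)))) ∧
    Filter.Tendsto (fun n =>
      μ n {ω | (1 / (n : ℝ)) * ∑ i, ℓ (Y n i ω) ≤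
        sSup {s | ∃ w ∈ simplex C, KL w (uniform C) ≤ (τ : EReal) ∧
          s = ∑ c, w c * ℓ c}}) Filter.atTop (nhds 1) := by
  have hq (c : Fin C) : 0 ≤ uniform C c := one_div_nonneg.mpr (Nat.cast_nonneg C)
  obtain ⟨hfail, hlim⟩ := faal_generalization_asymptotic_general μ hq Y hiid ℓ hτ
  refine ⟨fun ε hε => ⟨0, fun n _ => (hfail n).trans ?_⟩, hlim⟩
  gcongr ENNReal.ofReal (Real.exp ?_)
  nlinarith [hε.1]
end
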